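/- The Ricci tensor Ric of a 2n-dimensional Kähler base and the Ricci tensor R̄ic of its Sasakian lift satisfy R̄ic(X^L, Y^L) = Ric(X,Y) − 2g(X,Y) for all vector fields X, Y on the base; consequently the scalar curvatures are related by s̄ = s − 2n, where s is the scalar curvature of the base and s̄ that of the lift. -/

import Mathlib

/-!
Abstract framework for (local) differential geometry, following the standard
algebraic formulation: smooth functions form a commutative `ℝ`-algebra `F`,
vector fields form an `F`-module `V` equipped with a Lie bracket and a
directional derivative (derivation) action on functions.  Metrics, connections,
curvature, Ricci tensors (via orthonormal frames), Lie derivatives, exterior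
derivatives, almost contact metric / Sasakian structures, Kähler structures,
`D_{α,β}`-homotheties, twisted `η`-Ricci solitons, and the Sasakian lift of a
Kähler base are all expressed in this language.
-/

/-- The calculus of vector fields on a manifold: a Lie bracket and a
directional-derivative action of vector fields on functions, with the usual
rules. -/
structure VectorCalculus (F : Type*) (V : Type*) [CommRing F] [Algebra ℝ F]
    [AddCommGroup V] [Module F V] where
  bracket : V → V → V
  deriv : V → F → F
  bracket_antisymm : ∀ X Y, bracket X Y = - bracket Y X
  bracket_add_left : ∀ X Y Z, bracket (X + Y) Z = bracket X Z + bracket Y Z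
  bracket_smul_left : ∀ (f : F) (X Y : V),
      bracket (f • X) Y = f • bracket X Y - deriv Y f • X
  jacobi : ∀ X Y Z,
      bracket X (bracket Y Z) + bracket Y (bracket Z X) + bracket Z (bracket X Y) = 0
  deriv_add : ∀ (X : V) (f g : F), deriv X (f + g) = deriv X f + deriv X g
  deriv_mul : ∀ (X : V) (f g : F), deriv X (f * g) = deriv X f * g + f * deriv X g
  deriv_add_left : ∀ (X Y : V) (f : F), deriv (X + Y) f = deriv X f + deriv Y f
  deriv_smul_left : ∀ (f : F) (X : V) (h : F), deriv (f • X) h = f * deriv X h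
  deriv_const : ∀ (X : V) (r : ℝ), deriv X (algebraMap ℝ F r) = 0
  deriv_bracket : ∀ (X Y : V) (f : F),
      deriv (bracket X Y) f = deriv X (deriv Y f) - deriv Y (deriv X f)

section Defs

variable {F : Type*} {V : Type*} [CommRing F] [Algebra ℝ F]
  [AddCommGroup V] [Module F V]

/-- A (pseudo-)Riemannian metric: a symmetric `F`-bilinear form on vector fields. -/
structure IsMetric (g : V → V → F) : Prop where
  symm : ∀ X Y, g X Y = g Y X
  add_left : ∀ X Y Z, g (X + Y) Z = g X Z + g Y Z
  smul_left : ∀ (f : F) (X Y : V), g (f • X) Y = f * g X Y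

/-- `nabla` is the Levi-Civita connection of the metric `g`: an affine,
torsion-free, metric-compatible connection. -/
structure IsLeviCivita (C : VectorCalculus F V) (g : V → V → F)
    (nabla : V → V → V) : Prop where
  add_left : ∀ X Y Z, nabla (X + Y) Z = nabla X Z + nabla Y Z
  smul_left : ∀ (f : F) (X Y : V), nabla (f • X) Y = f • nabla X Y
  add_right : ∀ X Y Z, nabla X (Y + Z) = nabla X Y + nabla X Z
  leibniz : ∀ (X : V) (f : F) (Y : V),
      nabla X (f • Y) = C.deriv X f • Y + f • nabla X Y
  torsion_free : ∀ X Y, nabla X Y - nabla Y X = C.bracket X Y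
  compat : ∀ X Y Z, C.deriv X (g Y Z) = g (nabla X Y) Z + g Y (nabla X Z)

/-- Riemann curvature operator `R_{X Y} Z = ∇_X ∇_Y Z - ∇_Y ∇_X Z - ∇_{[X,Y]} Z`. -/
def curv (C : VectorCalculus F V) (nabla : V → V → V) (X Y Z : V) : V :=
  nabla X (nabla Y Z) - nabla Y (nabla X Z) - nabla (C.bracket X Y) Z

/-- An orthonormal spanning frame for the metric `g`. -/
def IsOrthFrame (g : V → V → F) {m : ℕ} (E : Fin m → V) : Prop :=
  (∀ i j, g (E i) (E j) = if i = j then (1 : F) else 0) ∧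
  (∀ X : V, X = ∑ i, g X (E i) • E i)

/-- Ricci tensor, computed as the trace of the curvature in the orthonormal
frame `E`:  `Ric(Y,Z) = ∑ᵢ g(R_{Eᵢ Y} Z, Eᵢ)`. -/
def ricci (C : VectorCalculus F V) (nabla : V → V → V) {m : ℕ} (E : Fin m → V)
    (g : V → V → F) (Y Z : V) : F :=
  ∑ i, g (curv C nabla (E i) Y Z) (E i)

/-- Scalar curvature: trace of the Ricci tensor in the frame `E`. -/
def scalarCurv (C : VectorCalculus F V) (nabla : V → V → V) {m : ℕ}
    (E : Fin m → V) (g : V → V → F) : F :=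
  ∑ i, ricci C nabla E g (E i) (E i)

/-- Lie derivative of a metric (symmetric 2-tensor):
`(L_X g)(Y,Z) = X g(Y,Z) - g([X,Y],Z) - g(Y,[X,Z])`. -/
def lieDerivMetric (C : VectorCalculus F V) (X : V) (g : V → V → F) (Y Z : V) : F :=
  C.deriv X (g Y Z) - g (C.bracket X Y) Z - g Y (C.bracket X Z)

/-- Lie derivative of a 1-form: `(L_X η)(Y) = X η(Y) - η([X,Y])`. -/
def lieDerivOneForm (C : VectorCalculus F V) (X : V) (eta : V → F) (Y : V) : F :=
  C.deriv X (eta Y) - eta (C.bracket X Y)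

/-- Lie derivative of a (1,1)-tensor field: `(L_X φ)(Y) = [X, φY] - φ[X,Y]`. -/
def lieDerivEndo (C : VectorCalculus F V) (X : V) (phi : V → V) (Y : V) : V :=
  C.bracket X (phi Y) - phi (C.bracket X Y)

/-- Lie derivative of a 2-form. -/
def lieDerivTwoForm (C : VectorCalculus F V) (X : V) (Th : V → V → F) (Y Z : V) : F :=
  C.deriv X (Th Y Z) - Th (C.bracket X Y) Z - Th Y (C.bracket X Z)

/-- Exterior derivative of a 1-form (Blair's convention, with the factor `1/2`):
`dη(X,Y) = (1/2)(X η(Y) - Y η(X) - η([X,Y]))`. -/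
noncomputable def extDerivOneForm (C : VectorCalculus F V) (eta : V → F) (X Y : V) : F :=
  (1/2 : ℝ) • (C.deriv X (eta Y) - C.deriv Y (eta X) - eta (C.bracket X Y))

/-- A 1-form is closed iff `X a(Y) - Y a(X) - a([X,Y]) = 0` for all `X, Y`. -/
def IsClosedOneForm (C : VectorCalculus F V) (a : V → F) : Prop :=
  ∀ X Y, C.deriv X (a Y) - C.deriv Y (a X) - a (C.bracket X Y) = 0

/-- A 2-form is closed iff its exterior derivative vanishes. -/
def IsClosedTwoForm (C : VectorCalculus F V) (Th : V → V → F) : Prop :=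
  ∀ X Y Z,
    C.deriv X (Th Y Z) - C.deriv Y (Th X Z) + C.deriv Z (Th X Y)
      - Th (C.bracket X Y) Z + Th (C.bracket X Z) Y - Th (C.bracket Y Z) X = 0

/-- Nijenhuis torsion of a (1,1)-tensor field `S`:
`N_S(X,Y) = S²[X,Y] + [SX,SY] - S([SX,Y]) - S([X,SY])`. -/
def nijenhuis (C : VectorCalculus F V) (S : V → V) (X Y : V) : V :=
  S (S (C.bracket X Y)) + C.bracket (S X) (S Y)
    - S (C.bracket (S X) Y) - S (C.bracket X (S Y))

/-- An almost contact metric structure `(φ, ξ, η, g)`. -/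
structure IsAlmostContactMetric (phi : V → V) (xi : V) (eta : V → F)
    (g : V → V → F) : Prop where
  metric : IsMetric g
  phi_add : ∀ X Y, phi (X + Y) = phi X + phi Y
  phi_smul : ∀ (f : F) (X : V), phi (f • X) = f • phi X
  eta_add : ∀ X Y, eta (X + Y) = eta X + eta Y
  eta_smul : ∀ (f : F) (X : V), eta (f • X) = f * eta X
  phi_sq : ∀ X, phi (phi X) = -X + eta X • xi
  eta_xi : eta xi = 1
  compat : ∀ X Y, g (phi X) (phi Y) = g X Y - eta X * eta Y

/-- A Sasakian structure: an almost contact metric structure whose Levi-Civita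
connection `nabla` satisfies `(∇_X φ)Y = g(X,Y) ξ - η(Y) X`. -/
def IsSasakianWith (C : VectorCalculus F V) (phi : V → V) (xi : V) (eta : V → F)
    (g : V → V → F) (nabla : V → V → V) : Prop :=
  IsAlmostContactMetric phi xi eta g ∧ IsLeviCivita C g nabla ∧
    ∀ X Y, nabla X (phi Y) - phi (nabla X Y) = g X Y • xi - eta Y • X

/-- Symmetric tensor product of two 1-forms:
`(a ⊙ b)(Y,Z) = (1/2)(a(Y) b(Z) + a(Z) b(Y))`. -/
noncomputable def symProd (a b : V → F) (Y Z : V) : F := (1/2 : ℝ) • (a Y * b Z + a Z * b Y)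

/-- Twisted `η`-Ricci soliton with data `(X, λ, C₁, C₂)`:
`η(X) = 0` and `Ric + (1/2) L_X g = λ g + 2 C₁ (L_X η) ⊙ η + C₂ η ⊗ η`. -/
def IsTwistedEtaRicciSoliton (C : VectorCalculus F V) (g : V → V → F)
    (eta : V → F) (Ric : V → V → F) (X : V) (lam C1 C2 : ℝ) : Prop :=
  eta X = 0 ∧
  ∀ Y Z, Ric Y Z + (1/2 : ℝ) • lieDerivMetric C X g Y Z =
    lam • g Y Z + (2 * C1) • symProd (lieDerivOneForm C X eta) eta Y Z
      + C2 • (eta Y * eta Z)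

/-- A Kähler structure `(J, g)` with Levi-Civita connection `nabla`. -/
structure IsKaehler (C : VectorCalculus F V) (J : V → V) (g : V → V → F)
    (nabla : V → V → V) : Prop where
  metric : IsMetric g
  lc : IsLeviCivita C g nabla
  J_add : ∀ X Y, J (X + Y) = J X + J Y
  J_smul : ∀ (f : F) (X : V), J (f • X) = f • J X
  J_sq : ∀ X, J (J X) = -X
  hermitian : ∀ X Y, g (J X) (J Y) = g X Y
  parallel : ∀ X Y, nabla X (J Y) = J (nabla X Y)

/-- The metric of the `D_{α,β}`-homothety: `g' = α g + (β² - α) η ⊗ η`. -/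
def dHomMetric (g : V → V → F) (eta : V → F) (α β : ℝ) (X Y : V) : F :=
  α • g X Y + (β ^ 2 - α) • (eta X * eta Y)

/-- The 1-form of the `D_{α,β}`-homothety: `η' = β η`. -/
def dHomEta (eta : V → F) (β : ℝ) (X : V) : F := β • eta X

end Defs

section DefsR

variable {F : Type*} {V : Type*} [CommRing F] [Algebra ℝ F]
  [AddCommGroup V] [Module F V] [Module ℝ V] [IsScalarTower ℝ F V]

/-- The Reeb field of the `D_{α,β}`-homothety: `ξ' = (1/β) ξ`. -/
noncomputable def dHomXi (xi : V) (β : ℝ) : V := β⁻¹ • xi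

/-- A `c`-Sasakian structure (`c` a real constant): an almost contact metric
structure whose Levi-Civita connection satisfies
`(∇_X φ)Y = c (g(X,Y) ξ - η(Y) X)`. -/
def IsCSasakianWith (C : VectorCalculus F V) (phi : V → V) (xi : V)
    (eta : V → F) (g : V → V → F) (nabla : V → V → V) (c : ℝ) : Prop :=
  IsAlmostContactMetric phi xi eta g ∧ IsLeviCivita C g nabla ∧
    ∀ X Y, nabla X (phi Y) - phi (nabla X Y) = c • (g X Y • xi - eta Y • X)

end DefsR

/-- The Sasakian lift of a Kähler base `(N, J, g)` to `M = ℝ × N`, presented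
axiomatically:  `liftF` is the pullback of functions along `π₂`, `liftV` is the
lift of vector fields `X ↦ X^L = X - (τ(X)∘π₂) ξ`, `ξ = ∂_t`, `η = dt + π₂*τ`,
`φ X^L = (JX)^L`, `φ ξ = 0`, `g^L = η ⊗ η + π₂* g`.  The structure fields
record exactly the identities satisfied by this construction. -/
structure SasakianLiftData
    {Fb : Type*} {Vb : Type*} [CommRing Fb] [Algebra ℝ Fb]
    [AddCommGroup Vb] [Module Fb Vb]
    {Fm : Type*} {Vm : Type*} [CommRing Fm] [Algebra ℝ Fm]
    [AddCommGroup Vm] [Module Fm Vm]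
    (Cb : VectorCalculus Fb Vb) (Cm : VectorCalculus Fm Vm)
    (J : Vb → Vb) (gb : Vb → Vb → Fb) where
  liftF : Fb →ₐ[ℝ] Fm
  liftV : Vb → Vm
  xi : Vm
  eta : Vm → Fm
  phi : Vm → Vm
  gL : Vm → Vm → Fm
  liftV_add : ∀ X Y, liftV (X + Y) = liftV X + liftV Y
  liftV_smul : ∀ (f : Fb) (X : Vb), liftV (f • X) = liftF f • liftV X
  eta_add : ∀ W W', eta (W + W') = eta W + eta W'
  eta_smul : ∀ (f : Fm) (W : Vm), eta (f • W) = f * eta W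
  phi_add : ∀ W W', phi (W + W') = phi W + phi W'
  phi_smul : ∀ (f : Fm) (W : Vm), phi (f • W) = f • phi W
  gL_metric : IsMetric gL
  eta_xi : eta xi = 1
  eta_lift : ∀ X, eta (liftV X) = 0
  phi_lift : ∀ X, phi (liftV X) = liftV (J X)
  phi_xi : phi xi = 0
  gL_lift : ∀ X Y, gL (liftV X) (liftV Y) = liftF (gb X Y)
  gL_xi : ∀ W, gL xi W = eta W
  bracket_lift : ∀ X Y, Cm.bracket (liftV X) (liftV Y)
      = liftV (Cb.bracket X Y) - ((2 : Fm) * liftF (gb X (J Y))) • xi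
  bracket_xi_lift : ∀ X, Cm.bracket xi (liftV X) = 0
  deriv_lift : ∀ (X : Vb) (f : Fb),
      Cm.deriv (liftV X) (liftF f) = liftF (Cb.deriv X f)
  deriv_xi : ∀ f : Fb, Cm.deriv xi (liftF f) = 0
  spanning : ∀ W : Vm, ∃ (k : ℕ) (a : Fin k → Fm) (X : Fin k → Vb),
      W = eta W • xi + ∑ i, a i • liftV (X i)

/-!
The brackets `[X^L, Y^L]` have `ξ`-component `-2 g(X, JY)`, so the pulled back form `g(X, JY)` is
skew, and Koszul's formula gives `∇_{X^L} Y^L = (∇_X Y)^L - g(X, JY) ξ`,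
`∇_ξ X^L = ∇_{X^L} ξ = -(JX)^L` and `∇_ξ ξ = 0`. Hence the curvature of the lift differs from that
of the base by terms quadratic in `J`, as in O'Neill's formulas. A trace does not depend on the
frame, so it may be taken over `ξ` and the lift of the frame of the base. In `R̄ic(X^L, Y^L)` the
horizontal directions contribute `-3 g(JX, JY)` and the direction `ξ` contributes `g(JX, JY)`;
in `s̄` the trace of the resulting `-2 g(JX, JY)` is half cancelled by `R̄ic(ξ, ξ) = ∑ g(JEᵢ, JEᵢ)`.
-/

theorem isUnit_two_of_algebra (K : Type*) {A : Type*} [Semifield K] [NeZero (2 : K)] [Semiring A]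
    [Algebra K A] : IsUnit (2 : A) := by
  simpa only [map_ofNat] using (IsUnit.mk0 (2 : K) two_ne_zero).map (algebraMap K A)

section Frames

variable {F V ι κ : Type*} [CommRing F] [AddCommGroup V] [Module F V]
  {g : V → V → F}

namespace IsMetric

/-- A metric as a bilinear form of Mathlib. -/
def bilin (hg : IsMetric g) : LinearMap.BilinForm F V :=
  LinearMap.mk₂ F g hg.add_left hg.smul_left
    (fun X Y Z => by rw [hg.symm, hg.add_left, hg.symm Y, hg.symm Z])
    (fun f X Y => by rw [hg.symm, hg.smul_left, hg.symm Y, smul_eq_mul])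

theorem bilin_apply (hg : IsMetric g) (X Y : V) : hg.bilin X Y = g X Y := rfl

theorem zero_left (hg : IsMetric g) (Y : V) : g 0 Y = 0 :=
  hg.bilin.map_zero₂ Y

theorem neg_left (hg : IsMetric g) (X Y : V) : g (-X) Y = -g X Y :=
  hg.bilin.map_neg₂ X Y

theorem sub_left (hg : IsMetric g) (X Y Z : V) : g (X - Y) Z = g X Z - g Y Z :=
  hg.bilin.map_sub₂ X Y Z

end IsMetric

/-- `E` is a Parseval frame of `g`: every field is recovered from its `g`-coefficients along `E`.
The fields `E i` need be neither orthonormal nor linearly independent, so such a frame may exist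
globally on a manifold that is not parallelizable. -/
def IsParsevalFrame [Fintype ι] (g : V → V → F) (E : ι → V) : Prop :=
  ∀ X, X = ∑ i, g X (E i) • E i

theorem IsOrthFrame.isParsevalFrame {m : ℕ} {E : Fin m → V} (hE : IsOrthFrame g E) :
    IsParsevalFrame g E :=
  hE.2

namespace IsParsevalFrame

variable [Fintype ι] [Fintype κ] {E : ι → V} {e : κ → V}

theorem separatingLeft (hE : IsParsevalFrame g E) (hg : IsMetric g) :
    hg.bilin.SeparatingLeft := by
  intro X hX
  rw [hE X]
  exact Finset.sum_eq_zero fun i _ => by rw [← hg.bilin_apply, hX, zero_smul]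

theorem map_eq_sum {M : Type*} [AddCommGroup M] [Module F M] (hE : IsParsevalFrame g E)
    (f : V →ₗ[F] M) (X : V) : f X = ∑ i, g X (E i) • f (E i) := by
  conv_lhs => rw [hE X]
  simp only [map_sum, map_smul]

theorem sum_mul_eq (hE : IsParsevalFrame g E) (hg : IsMetric g) (X Y : V) :
    ∑ i, g X (E i) * g (E i) Y = g X Y :=
  (hE.map_eq_sum (hg.bilin.flip Y) X).symm

theorem sum_apply_self_eq (hE : IsParsevalFrame g E) (he : IsParsevalFrame g e)
    (hg : IsMetric g) (B : LinearMap.BilinForm F V) :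
    ∑ i, B (E i) (E i) = ∑ j, B (e j) (e j) := by
  calc ∑ i, B (E i) (E i)
      = ∑ i, ∑ j, g (E i) (e j) * B (e j) (E i) :=
        Finset.sum_congr rfl fun i _ => he.map_eq_sum (B.flip (E i)) (E i)
    _ = ∑ j, ∑ i, g (e j) (E i) * B (e j) (E i) := by
        rw [Finset.sum_comm]
        simp only [hg.symm (e _)]
    _ = ∑ j, B (e j) (e j) :=
        Finset.sum_congr rfl fun j _ => (hE.map_eq_sum (B (e j)) (e j)).symm

end IsParsevalFrame

end Frames

section LeviCivita

variable {F V : Type*} [CommRing F] [Algebra ℝ F] [AddCommGroup V] [Module F V]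
  {C : VectorCalculus F V} {g : V → V → F} {D : V → V → V}

namespace VectorCalculus

theorem deriv_zero (C : VectorCalculus F V) (X : V) : C.deriv X 0 = 0 := by
  simpa using C.deriv_const X 0

theorem deriv_one (C : VectorCalculus F V) (X : V) : C.deriv X 1 = 0 := by
  simpa using C.deriv_const X 1

end VectorCalculus

namespace IsLeviCivita

theorem zero_left (h : IsLeviCivita C g D) (Z : V) : D 0 Z = 0 :=
  map_zero (AddMonoidHom.mk' (D · Z) fun X Y => h.add_left X Y Z)

theorem neg_left (h : IsLeviCivita C g D) (X Z : V) : D (-X) Z = -D X Z :=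
  map_neg (AddMonoidHom.mk' (D · Z) fun X Y => h.add_left X Y Z) X

theorem sub_left (h : IsLeviCivita C g D) (X Y Z : V) : D (X - Y) Z = D X Z - D Y Z :=
  map_sub (AddMonoidHom.mk' (D · Z) fun X Y => h.add_left X Y Z) X Y

theorem zero_right (h : IsLeviCivita C g D) (X : V) : D X 0 = 0 :=
  map_zero (AddMonoidHom.mk' (D X) (h.add_right X))

theorem neg_right (h : IsLeviCivita C g D) (X Y : V) : D X (-Y) = -D X Y :=
  map_neg (AddMonoidHom.mk' (D X) (h.add_right X)) Y

theorem sub_right (h : IsLeviCivita C g D) (X Y Z : V) : D X (Y - Z) = D X Y - D X Z :=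
  map_sub (AddMonoidHom.mk' (D X) (h.add_right X)) Y Z

theorem koszul_formula (h : IsLeviCivita C g D) (hg : IsMetric g) (X Y Z : V) :
    2 * g (D X Y) Z = C.deriv X (g Y Z) + C.deriv Y (g X Z) - C.deriv Z (g X Y)
      + g (C.bracket X Y) Z - g (C.bracket X Z) Y - g (C.bracket Y Z) X := by
  simp only [h.compat, ← h.torsion_free, hg.sub_left]
  rw [hg.symm Y (D X Z), hg.symm X (D Y Z), hg.symm X (D Z Y)]
  ring

theorem curv_self (h : IsLeviCivita C g D) (X Z : V) : curv C D X X Z = 0 := by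
  rw [curv, ← h.torsion_free, sub_self, sub_self, h.zero_left, sub_zero]

theorem curv_swap (h : IsLeviCivita C g D) (X Y Z : V) :
    curv C D X Y Z = -curv C D Y X Z := by
  simp only [curv, C.bracket_antisymm X Y, h.neg_left]
  abel

theorem curv_add_left (h : IsLeviCivita C g D) (X X' Y Z : V) :
    curv C D (X + X') Y Z = curv C D X Y Z + curv C D X' Y Z := by
  simp only [curv, C.bracket_add_left, h.add_left, h.add_right]
  abel

theorem curv_smul_left (h : IsLeviCivita C g D) (f : F) (X Y Z : V) :
    curv C D (f • X) Y Z = f • curv C D X Y Z := by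
  simp only [curv, C.bracket_smul_left, h.smul_left, h.leibniz, h.sub_left]
  module

theorem curv_add_middle (h : IsLeviCivita C g D) (X Y Y' Z : V) :
    curv C D X (Y + Y') Z = curv C D X Y Z + curv C D X Y' Z := by
  rw [h.curv_swap, h.curv_add_left, neg_add, ← h.curv_swap, ← h.curv_swap]

theorem curv_smul_middle (h : IsLeviCivita C g D) (f : F) (X Y Z : V) :
    curv C D X (f • Y) Z = f • curv C D X Y Z := by
  rw [h.curv_swap, h.curv_smul_left, ← smul_neg, ← h.curv_swap]

theorem curv_add_right (h : IsLeviCivita C g D) (X Y Z Z' : V) :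
    curv C D X Y (Z + Z') = curv C D X Y Z + curv C D X Y Z' := by
  simp only [curv, h.add_right]
  abel

theorem curv_smul_right (h : IsLeviCivita C g D) (f : F) (X Y Z : V) :
    curv C D X Y (f • Z) = f • curv C D X Y Z := by
  simp only [curv, h.leibniz, h.add_right, C.deriv_bracket]
  module

/-- The endomorphism `W ↦ R_{W Y} Z`, whose trace is `Ric(Y, Z)`. -/
def curvEndo (h : IsLeviCivita C g D) (Y Z : V) : V →ₗ[F] V where
  toFun W := curv C D W Y Z
  map_add' X X' := h.curv_add_left X X' Y Z
  map_smul' f X := h.curv_smul_left f X Y Z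

/-- The Ricci tensor, computed in the frame `E`, as a bilinear form of Mathlib. -/
def ricciForm (h : IsLeviCivita C g D) (hg : IsMetric g) {m : ℕ} (E : Fin m → V) :
    LinearMap.BilinForm F V :=
  LinearMap.mk₂ F (ricci C D E g)
    (by simp only [ricci, h.curv_add_middle, hg.add_left, Finset.sum_add_distrib, implies_true])
    (by simp only [ricci, h.curv_smul_middle, hg.smul_left, Finset.mul_sum, smul_eq_mul,
      implies_true])
    (by simp only [ricci, h.curv_add_right, hg.add_left, Finset.sum_add_distrib, implies_true])
    (by simp only [ricci, h.curv_smul_right, hg.smul_left, Finset.mul_sum, smul_eq_mul,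
      implies_true])

variable {ι : Type*} [Fintype ι] {m : ℕ} {E : Fin m → V} {e : ι → V}

theorem ricci_eq_sum (h : IsLeviCivita C g D) (hg : IsMetric g) (hE : IsParsevalFrame g E)
    (he : IsParsevalFrame g e) (Y Z : V) :
    ricci C D E g Y Z = ∑ j, g (curv C D (e j) Y Z) (e j) :=
  hE.sum_apply_self_eq he hg (hg.bilin ∘ₗ h.curvEndo Y Z)

theorem scalarCurv_eq_sum (h : IsLeviCivita C g D) (hg : IsMetric g) (hE : IsParsevalFrame g E)
    (he : IsParsevalFrame g e) :
    scalarCurv C D E g = ∑ j, ricci C D E g (e j) (e j) :=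
  hE.sum_apply_self_eq he hg (h.ricciForm hg E)

end IsLeviCivita

end LeviCivita

namespace SasakianLiftData

variable {Fb Vb Fm Vm : Type*} [CommRing Fb] [Algebra ℝ Fb] [AddCommGroup Vb] [Module Fb Vb]
  [CommRing Fm] [Algebra ℝ Fm] [AddCommGroup Vm] [Module Fm Vm]
  {Cb : VectorCalculus Fb Vb} {Cm : VectorCalculus Fm Vm}
  {J : Vb → Vb} {gb : Vb → Vb → Fb}

theorem liftV_sum {ι : Type*} (L : SasakianLiftData Cb Cm J gb) (s : Finset ι) (X : ι → Vb) :
    L.liftV (∑ i ∈ s, X i) = ∑ i ∈ s, L.liftV (X i) :=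
  map_sum (AddMonoidHom.mk' L.liftV L.liftV_add) X s

theorem gL_xi_right (L : SasakianLiftData Cb Cm J gb) (W : Vm) : L.gL W L.xi = L.eta W := by
  rw [L.gL_metric.symm, L.gL_xi]

theorem bracket_lift_xi (L : SasakianLiftData Cb Cm J gb) (X : Vb) :
    Cm.bracket (L.liftV X) L.xi = 0 := by
  rw [Cm.bracket_antisymm, L.bracket_xi_lift, neg_zero]

theorem eta_bracket_lift (L : SasakianLiftData Cb Cm J gb) (X Y : Vb) :
    L.eta (Cm.bracket (L.liftV X) (L.liftV Y)) = -(2 * L.liftF (gb X (J Y))) := by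
  rw [L.bracket_lift, ← L.gL_xi_right, L.gL_metric.sub_left, L.gL_metric.smul_left,
    L.gL_xi_right, L.gL_xi_right, L.eta_lift, L.eta_xi, zero_sub, mul_one]

theorem liftF_metric_J_left (L : SasakianLiftData Cb Cm J gb) (hg : IsMetric gb) (X Y : Vb) :
    L.liftF (gb (J X) Y) = -L.liftF (gb X (J Y)) := by
  have hXY : L.eta (Cm.bracket (L.liftV X) (L.liftV Y))
      = -L.eta (Cm.bracket (L.liftV Y) (L.liftV X)) := by
    rw [Cm.bracket_antisymm, ← L.gL_xi_right, L.gL_metric.neg_left, L.gL_xi_right]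
  rw [L.eta_bracket_lift, L.eta_bracket_lift, hg.symm Y] at hXY
  apply (isUnit_two_of_algebra ℝ).mul_left_cancel
  linear_combination -hXY

theorem liftF_metric_J_self (L : SasakianLiftData Cb Cm J gb) (hg : IsMetric gb) (X : Vb) :
    L.liftF (gb (J X) X) = 0 := by
  have hX := L.liftF_metric_J_left hg X X
  rw [hg.symm X] at hX
  apply (isUnit_two_of_algebra ℝ).mul_left_cancel
  linear_combination hX

theorem liftF_metric_J_J (L : SasakianLiftData Cb Cm J gb) (hg : IsMetric gb) (X Y : Vb) :
    L.liftF (gb X (J (J Y))) = -L.liftF (gb (J X) (J Y)) := by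
  rw [L.liftF_metric_J_left hg, neg_neg]

theorem span_insert_xi_range_liftV (L : SasakianLiftData Cb Cm J gb) :
    Submodule.span Fm (insert L.xi (Set.range L.liftV)) = ⊤ := by
  refine Submodule.eq_top_iff'.mpr fun W => ?_
  obtain ⟨k, a, X, hW⟩ := L.spanning W
  rw [hW]
  refine add_mem (Submodule.smul_mem _ _ (Submodule.subset_span (Set.mem_insert _ _)))
    (sum_mem fun i _ => Submodule.smul_mem _ _ (Submodule.subset_span ?_))
  exact Set.mem_insert_of_mem _ ⟨X i, rfl⟩

theorem linearMap_ext {M : Type*} [AddCommGroup M] [Module Fm M]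
    (L : SasakianLiftData Cb Cm J gb) {f f' : Vm →ₗ[Fm] M} (hxi : f L.xi = f' L.xi)
    (hlift : ∀ X, f (L.liftV X) = f' (L.liftV X)) : f = f' :=
  LinearMap.ext_on L.span_insert_xi_range_liftV <|
    Set.forall_mem_insert.mpr ⟨hxi, Set.forall_mem_range.mpr hlift⟩

theorem ext_of_eta_of_gL_lift (L : SasakianLiftData Cb Cm J gb)
    (hnd : L.gL_metric.bilin.SeparatingLeft) {W W' : Vm} (heta : L.eta W = L.eta W')
    (hlift : ∀ X, L.gL W (L.liftV X) = L.gL W' (L.liftV X)) : W = W' := by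
  have hxi : L.gL W L.xi = L.gL W' L.xi := by rw [L.gL_xi_right, L.gL_xi_right, heta]
  have hform : L.gL_metric.bilin W = L.gL_metric.bilin W' := L.linearMap_ext hxi hlift
  exact LinearMap.ker_eq_bot.mp (LinearMap.separatingLeft_iff_ker_eq_bot.mp hnd) hform

section Frames

variable {ι : Type*} [Fintype ι]

/-- The frame of the lift made of `ξ` (at index `none`) and the lifts of the fields `E i`. -/
def liftFrame (L : SasakianLiftData Cb Cm J gb) (E : ι → Vb) : Option ι → Vm
  | none => L.xi
  | some i => L.liftV (E i)

theorem isParsevalFrame_liftFrame (L : SasakianLiftData Cb Cm J gb) {E : ι → Vb}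
    (hE : IsParsevalFrame gb E) : IsParsevalFrame L.gL (L.liftFrame E) := by
  let P : Vm →ₗ[Fm] Vm :=
    ∑ o, (L.gL_metric.bilin.flip (L.liftFrame E o)).smulRight (L.liftFrame E o)
  have hP (W : Vm) :
      P W = L.eta W • L.xi + ∑ i, L.gL W (L.liftV (E i)) • L.liftV (E i) := by
    simp [P, liftFrame, IsMetric.bilin_apply, gL_xi_right]
  have hid : LinearMap.id = P := by
    refine L.linearMap_ext ?_ fun X => ?_
    · simp [hP, L.eta_xi, L.gL_xi, L.eta_lift]
    · simp only [hP, L.eta_lift, L.gL_lift, zero_smul, zero_add, ← L.liftV_smul, ← L.liftV_sum,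
        ← hE X, LinearMap.id_apply]
  intro W
  simpa [P, IsMetric.bilin_apply] using LinearMap.congr_fun hid W

end Frames

section Connection

variable {nablab : Vb → Vb → Vb} {nablaM : Vm → Vm → Vm}

theorem eta_nabla (L : SasakianLiftData Cb Cm J gb) (hLC : IsLeviCivita Cm L.gL nablaM)
    (U W : Vm) : L.eta (nablaM U W) = Cm.deriv U (L.eta W) - L.gL (nablaM U L.xi) W := by
  rw [← L.gL_xi, ← L.gL_xi, hLC.compat, add_sub_cancel_left]

theorem eta_nabla_xi (L : SasakianLiftData Cb Cm J gb) (hLC : IsLeviCivita Cm L.gL nablaM)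
    (U : Vm) : L.eta (nablaM U L.xi) = 0 := by
  have hU := L.eta_nabla hLC U L.xi
  rw [L.eta_xi, Cm.deriv_one, L.gL_xi_right] at hU
  apply (isUnit_two_of_algebra ℝ).mul_left_cancel
  linear_combination hU

theorem nabla_lift_xi_eq_nabla_xi_lift (L : SasakianLiftData Cb Cm J gb)
    (hLC : IsLeviCivita Cm L.gL nablaM) (X : Vb) :
    nablaM (L.liftV X) L.xi = nablaM L.xi (L.liftV X) :=
  sub_eq_zero.mp <| (hLC.torsion_free _ _).trans (L.bracket_lift_xi X)

theorem nabla_lift_xi (L : SasakianLiftData Cb Cm J gb) (hg : IsMetric gb)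
    (hLC : IsLeviCivita Cm L.gL nablaM) (hnd : L.gL_metric.bilin.SeparatingLeft) (X : Vb) :
    nablaM (L.liftV X) L.xi = -L.liftV (J X) := by
  refine L.ext_of_eta_of_gL_lift hnd ?_ fun Z => ?_
  · rw [L.eta_nabla_xi hLC, ← L.gL_xi_right, L.gL_metric.neg_left, L.gL_xi_right, L.eta_lift,
      neg_zero]
  · apply (isUnit_two_of_algebra ℝ).mul_left_cancel
    rw [hLC.koszul_formula L.gL_metric]
    simp only [L.gL_xi, L.gL_xi_right, L.gL_lift, L.eta_lift, L.deriv_xi, Cm.deriv_zero,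
      L.bracket_lift_xi, L.bracket_xi_lift, L.gL_metric.zero_left, L.eta_bracket_lift,
      L.gL_metric.neg_left, L.liftF_metric_J_left hg]
    ring

theorem nabla_xi_lift (L : SasakianLiftData Cb Cm J gb) (hg : IsMetric gb)
    (hLC : IsLeviCivita Cm L.gL nablaM) (hnd : L.gL_metric.bilin.SeparatingLeft) (X : Vb) :
    nablaM L.xi (L.liftV X) = -L.liftV (J X) :=
  (L.nabla_lift_xi_eq_nabla_xi_lift hLC X).symm.trans (L.nabla_lift_xi hg hLC hnd X)

theorem nabla_xi_xi (L : SasakianLiftData Cb Cm J gb)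
    (hLC : IsLeviCivita Cm L.gL nablaM) (hnd : L.gL_metric.bilin.SeparatingLeft) :
    nablaM L.xi L.xi = 0 := by
  refine L.ext_of_eta_of_gL_lift hnd ?_ fun Z => ?_
  · rw [L.eta_nabla_xi hLC, ← L.gL_xi_right, L.gL_metric.zero_left]
  · have hZ := L.eta_nabla hLC L.xi (L.liftV Z)
    rw [← L.nabla_lift_xi_eq_nabla_xi_lift hLC, L.eta_nabla_xi hLC, L.eta_lift,
      Cm.deriv_zero, zero_sub, zero_eq_neg] at hZ
    rw [hZ, L.gL_metric.zero_left]

theorem nabla_lift_lift (L : SasakianLiftData Cb Cm J gb) (hg : IsMetric gb)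
    (hD : IsLeviCivita Cb gb nablab) (hLC : IsLeviCivita Cm L.gL nablaM)
    (hnd : L.gL_metric.bilin.SeparatingLeft) (X Y : Vb) :
    nablaM (L.liftV X) (L.liftV Y)
      = L.liftV (nablab X Y) - L.liftF (gb X (J Y)) • L.xi := by
  refine L.ext_of_eta_of_gL_lift hnd ?_ fun Z => ?_
  · rw [L.eta_nabla hLC, L.nabla_lift_xi hg hLC hnd, L.eta_lift, Cm.deriv_zero,
      L.gL_metric.neg_left, L.gL_lift, L.liftF_metric_J_left hg, ← L.gL_xi_right,
      L.gL_metric.sub_left, L.gL_metric.smul_left, L.gL_xi_right, L.gL_xi_right, L.eta_lift,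
      L.eta_xi]
    ring
  · apply (isUnit_two_of_algebra ℝ).mul_left_cancel
    have hbase := congrArg L.liftF (hD.koszul_formula hg X Y Z)
    simp only [map_add, map_sub, map_mul, map_ofNat] at hbase
    rw [hLC.koszul_formula L.gL_metric]
    simp only [L.gL_lift, L.deriv_lift, L.bracket_lift, L.gL_metric.sub_left,
      L.gL_metric.smul_left, L.gL_xi, L.eta_lift]
    linear_combination -hbase

theorem eta_curv_xi_lift_lift (L : SasakianLiftData Cb Cm J gb) (hg : IsMetric gb)
    (hD : IsLeviCivita Cb gb nablab) (hLC : IsLeviCivita Cm L.gL nablaM)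
    (hnd : L.gL_metric.bilin.SeparatingLeft) (Y Z : Vb) :
    L.eta (curv Cm nablaM L.xi (L.liftV Y) (L.liftV Z)) = L.liftF (gb (J Y) (J Z)) := by
  simp only [curv, ← L.gL_xi_right, L.nabla_lift_lift hg hD hLC hnd, L.nabla_xi_lift hg hLC hnd,
    L.nabla_xi_xi hLC hnd, L.bracket_xi_lift, hLC.zero_left, hLC.sub_right, hLC.neg_right,
    hLC.leibniz, L.deriv_xi, L.gL_metric.sub_left, L.gL_metric.add_left, L.gL_metric.neg_left,
    L.gL_metric.smul_left, L.gL_metric.zero_left]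
  simp only [L.gL_xi_right, L.eta_lift, L.eta_xi, L.liftF_metric_J_J hg]
  ring

theorem curv_lift_xi_xi (L : SasakianLiftData Cb Cm J gb) (hg : IsMetric gb)
    (hLC : IsLeviCivita Cm L.gL nablaM) (hnd : L.gL_metric.bilin.SeparatingLeft) (X : Vb) :
    curv Cm nablaM (L.liftV X) L.xi L.xi = -L.liftV (J (J X)) := by
  simp only [curv, L.nabla_lift_xi hg hLC hnd, L.nabla_xi_lift hg hLC hnd,
    L.nabla_xi_xi hLC hnd, L.bracket_lift_xi, hLC.zero_left, hLC.zero_right, hLC.neg_right]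
  abel

theorem gL_curv_lift_lift_lift (L : SasakianLiftData Cb Cm J gb) (hg : IsMetric gb)
    (hD : IsLeviCivita Cb gb nablab) (hLC : IsLeviCivita Cm L.gL nablaM)
    (hnd : L.gL_metric.bilin.SeparatingLeft) (X Y Z T : Vb) :
    L.gL (curv Cm nablaM (L.liftV X) (L.liftV Y) (L.liftV Z)) (L.liftV T)
      = L.liftF (gb (curv Cb nablab X Y Z) T + gb Y (J Z) * gb (J X) T
        - gb X (J Z) * gb (J Y) T - 2 * (gb X (J Y) * gb (J Z) T)) := by
  simp only [curv, L.nabla_lift_lift hg hD hLC hnd, L.nabla_xi_lift hg hLC hnd,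
    L.nabla_lift_xi hg hLC hnd, L.bracket_lift, hLC.sub_right, hLC.sub_left, hLC.smul_left,
    hLC.leibniz, L.gL_metric.sub_left, L.gL_metric.neg_left, L.gL_metric.add_left,
    L.gL_metric.smul_left, L.gL_lift, L.gL_xi, L.eta_lift, hg.sub_left, map_sub, map_add,
    map_mul, map_ofNat]
  ring

end Connection

section Ricci

variable {nablab : Vb → Vb → Vb} {nablaM : Vm → Vm → Vm} {m k : ℕ}
  {Eb : Fin m → Vb} {Em : Fin k → Vm}

theorem sum_gL_curv_lift (L : SasakianLiftData Cb Cm J gb) (hg : IsMetric gb)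
    (hD : IsLeviCivita Cb gb nablab) (hLC : IsLeviCivita Cm L.gL nablaM)
    (hnd : L.gL_metric.bilin.SeparatingLeft) (hEb : IsParsevalFrame gb Eb) (X Y : Vb) :
    ∑ i, L.gL (curv Cm nablaM (L.liftV (Eb i)) (L.liftV X) (L.liftV Y)) (L.liftV (Eb i))
      = L.liftF (ricci Cb nablab Eb gb X Y) - 3 * L.liftF (gb (J X) (J Y)) := by
  have htrace (U W : Vb) :
      ∑ i, L.liftF (gb (Eb i) U) * L.liftF (gb W (Eb i)) = L.liftF (gb W U) := by
    simp only [← hEb.sum_mul_eq hg W U, map_sum, map_mul, mul_comm]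
  simp only [L.gL_curv_lift_lift_lift hg hD hLC hnd, map_add, map_sub, map_mul, map_ofNat,
    L.liftF_metric_J_self hg, mul_zero, add_zero, Finset.sum_sub_distrib, ← Finset.mul_sum,
    htrace, ricci, map_sum, hg.symm (J Y) (J X)]
  ring

theorem ricci_lift_lift (L : SasakianLiftData Cb Cm J gb) (hg : IsMetric gb)
    (hD : IsLeviCivita Cb gb nablab) (hLC : IsLeviCivita Cm L.gL nablaM)
    (hEb : IsParsevalFrame gb Eb) (hEm : IsParsevalFrame L.gL Em) (X Y : Vb) :
    ricci Cm nablaM Em L.gL (L.liftV X) (L.liftV Y)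
      = L.liftF (ricci Cb nablab Eb gb X Y) - 2 * L.liftF (gb (J X) (J Y)) := by
  have hnd := hEm.separatingLeft L.gL_metric
  rw [hLC.ricci_eq_sum L.gL_metric hEm (L.isParsevalFrame_liftFrame hEb), Fintype.sum_option]
  simp only [liftFrame, L.gL_xi_right, L.eta_curv_xi_lift_lift hg hD hLC hnd,
    L.sum_gL_curv_lift hg hD hLC hnd hEb]
  ring

theorem ricci_xi_xi (L : SasakianLiftData Cb Cm J gb) (hg : IsMetric gb)
    (hLC : IsLeviCivita Cm L.gL nablaM) (hEb : IsParsevalFrame gb Eb)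
    (hEm : IsParsevalFrame L.gL Em) :
    ricci Cm nablaM Em L.gL L.xi L.xi = L.liftF (∑ i, gb (J (Eb i)) (J (Eb i))) := by
  have hnd := hEm.separatingLeft L.gL_metric
  rw [hLC.ricci_eq_sum L.gL_metric hEm (L.isParsevalFrame_liftFrame hEb), Fintype.sum_option]
  simp only [liftFrame, hLC.curv_self, L.curv_lift_xi_xi hg hLC hnd, L.gL_metric.zero_left,
    L.gL_metric.neg_left, L.gL_lift, L.liftF_metric_J_left hg (J _), neg_neg, zero_add, map_sum]

theorem scalarCurv_eq (L : SasakianLiftData Cb Cm J gb) (hg : IsMetric gb)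
    (hD : IsLeviCivita Cb gb nablab) (hLC : IsLeviCivita Cm L.gL nablaM)
    (hEb : IsParsevalFrame gb Eb) (hEm : IsParsevalFrame L.gL Em) :
    scalarCurv Cm nablaM Em L.gL = L.liftF (scalarCurv Cb nablab Eb gb)
      - L.liftF (∑ i, gb (J (Eb i)) (J (Eb i))) := by
  rw [hLC.scalarCurv_eq_sum L.gL_metric hEm (L.isParsevalFrame_liftFrame hEb),
    Fintype.sum_option]
  simp only [liftFrame, L.ricci_xi_xi hg hLC hEb hEm, L.ricci_lift_lift hg hD hLC hEb hEm,
    scalarCurv, Finset.sum_sub_distrib, ← Finset.mul_sum, map_sum]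
  ring

end Ricci

end SasakianLiftData

theorem sasakian_lift_ricci_general
    {Fb Vb Fm Vm : Type*} [CommRing Fb] [Algebra ℝ Fb] [AddCommGroup Vb] [Module Fb Vb]
    [CommRing Fm] [Algebra ℝ Fm] [AddCommGroup Vm] [Module Fm Vm]
    {Cb : VectorCalculus Fb Vb} {Cm : VectorCalculus Fm Vm}
    {J : Vb → Vb} {gb : Vb → Vb → Fb} {nablab : Vb → Vb → Vb}
    (hg : IsMetric gb) (hD : IsLeviCivita Cb gb nablab)
    (L : SasakianLiftData Cb Cm J gb)
    {nablaM : Vm → Vm → Vm} (hLC : IsLeviCivita Cm L.gL nablaM)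
    {m k : ℕ} {Eb : Fin m → Vb} (hEb : IsParsevalFrame gb Eb)
    {Em : Fin k → Vm} (hEm : IsParsevalFrame L.gL Em) :
    (∀ X Y : Vb,
      ricci Cm nablaM Em L.gL (L.liftV X) (L.liftV Y)
        = L.liftF (ricci Cb nablab Eb gb X Y) - 2 * L.liftF (gb (J X) (J Y))) ∧
    scalarCurv Cm nablaM Em L.gL
      = L.liftF (scalarCurv Cb nablab Eb gb) - L.liftF (∑ i, gb (J (Eb i)) (J (Eb i))) :=
  ⟨L.ricci_lift_lift hg hD hLC hEb hEm, L.scalarCurv_eq hg hD hLC hEb hEm⟩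

/-- Ricci tensors of a `2n`-dimensional Kähler base and of its
Sasakian lift satisfy `R̄ic(X^L, Y^L) = Ric(X,Y) - 2 g(X,Y)`, and the scalar
curvatures satisfy `s̄ = s - 2n`. -/
theorem sasakian_lift_ricci
    {Fb Vb Fm Vm : Type*} [CommRing Fb] [Algebra ℝ Fb]
    [AddCommGroup Vb] [Module Fb Vb]
    [CommRing Fm] [Algebra ℝ Fm] [AddCommGroup Vm] [Module Fm Vm]
    (Cb : VectorCalculus Fb Vb) (Cm : VectorCalculus Fm Vm)
    (J : Vb → Vb) (gb : Vb → Vb → Fb) (nablab : Vb → Vb → Vb)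
    (hK : IsKaehler Cb J gb nablab)
    (L : SasakianLiftData Cb Cm J gb)
    (nablaM : Vm → Vm → Vm) (hLC : IsLeviCivita Cm L.gL nablaM)
    (n : ℕ) (hn : 1 ≤ n)
    (Eb : Fin (2*n) → Vb) (hEb : IsOrthFrame gb Eb)
    (Em : Fin (2*n+1) → Vm) (hEm : IsOrthFrame L.gL Em) :
    (∀ X Y : Vb,
      ricci Cm nablaM Em L.gL (L.liftV X) (L.liftV Y)
        = L.liftF (ricci Cb nablab Eb gb X Y) - (2 : Fm) * L.liftF (gb X Y)) ∧
    scalarCurv Cm nablaM Em L.gL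
      = L.liftF (scalarCurv Cb nablab Eb gb) - algebraMap ℝ Fm (2 * (n : ℝ)) := by
  simpa [hK.hermitian, hEb.1, map_ofNat] using sasakian_lift_ricci_general hK.metric hK.lc L hLC
    hEb.isParsevalFrame hEm.isParsevalFrame
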